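/- arXiv:1706.09134 — 5 statements merged into one kernel-verified Lean document; each statement's English description precedes it below -/
import Mathlib

section
/- Let φ_1, φ_2 be commuting field automorphisms of k(x,y), let a, d ∈ k(x)[y] with d ≠ 0, and let m, n ∈ ℕ. Then a/(φ_1^m φ_2^n(d)) = φ_1(u) − u + φ_2(v) − v + φ_1^{−m}φ_2^{−n}(a)/d, where u = Σ_{j=0}^{m−1} φ_1^{j−m}(a)/(φ_1^j φ_2^n(d)) and v = Σ_{ℓ=0}^{n−1} φ_2^{ℓ−n}φ_1^{−m}(a)/φ_2^ℓ(d). -/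
/-!
For an additive map `φ` and a sequence with `φ (f j) = f (j + 1)`, the difference `φ S - S` of the
partial sum `S = ∑ j < n, f j` telescopes to `f n - f 0`. Both `u` and `v` are such partial sums.
The `u`-part moves `φ₁ ^ m` off the denominator and onto the numerator as `φ₁ ^ (-m)`; the `v`-part
does the same for `φ₂ ^ n`, and since `φ₁` and `φ₂` commute the two inverse powers on the numerator
may be exchanged. With `b = d⁻¹` the formula becomes an identity between products, which makes sense
in any ring.
-/

open Polynomial

noncomputable section

variable (k : Type*) [Field k] [CharZero k]

/-- `k(x,y)` realized as `k(x)(y)`: rational functions in `y` over `k(x) = RatFunc k`. -/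
abbrev F2 := RatFunc (RatFunc k)

/-- The element `x` of `k(x,y)`. -/
def Fx : F2 k := RatFunc.C RatFunc.X

/-- The element `y` of `k(x,y)`. -/
def Fy : F2 k := RatFunc.X

/-- The embedding of the constants `k` into `k(x,y)`. -/
def Fc : k →+* F2 k := RatFunc.C.comp RatFunc.C

/-- The embedding of `k(x)` into `k(x,y)`. -/
def FKx : RatFunc k →+* F2 k := RatFunc.C

/-- The embedding of `k(x)[y]` into `k(x,y)`. -/
def FP : Polynomial (RatFunc k) →+* F2 k := algebraMap _ _

/-- The embedding of `k[x,y]` (realized as `(k[x])[y]`, outer variable `y`) into `k(x)[y]`. -/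
def PP : Polynomial (Polynomial k) →+* Polynomial (RatFunc k) :=
  Polynomial.mapRingHom (algebraMap (Polynomial k) (RatFunc k))

/-- The embedding of `k[y]` into `k[x,y] = (k[x])[y]`. -/
def PY : Polynomial k →+* Polynomial (Polynomial k) :=
  Polynomial.mapRingHom Polynomial.C

/-- The embedding of `k[x,y]` into `k(x,y)`. -/
def FPP : Polynomial (Polynomial k) →+* F2 k := (FP k).comp (PP k)

/-- The embedding of `k[y]` into `k(x)[y]`. -/
def PYx : Polynomial k →+* Polynomial (RatFunc k) :=
  Polynomial.mapRingHom (algebraMap k (RatFunc k))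

variable {k}

/-- `σ` is the shift operator `σ_x : f(x,y) ↦ f(x+1,y)`, i.e. the automorphism of
`k(x,y)` fixing `k(y)` pointwise (equivalently, fixing the generators `k` and `y`)
and sending `x` to `x+1`. -/
def IsShiftX (σ : F2 k ≃+* F2 k) : Prop :=
  (∀ c : k, σ (Fc k c) = Fc k c) ∧ σ (Fy k) = Fy k ∧ σ (Fx k) = Fx k + 1

/-- `σ` is the `q`-shift operator `τ_{x,q} : f(x,y) ↦ f(qx,y)`, i.e. the automorphism of
`k(x,y)` fixing `k(y)` pointwise and sending `x` to `q·x`. -/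
def IsQShiftX (q : k) (σ : F2 k ≃+* F2 k) : Prop :=
  (∀ c : k, σ (Fc k c) = Fc k c) ∧ σ (Fy k) = Fy k ∧ σ (Fx k) = Fc k q * Fx k

/-- `σ` is the shift operator `σ_y : f(x,y) ↦ f(x,y+1)`, i.e. the automorphism of
`k(x,y)` fixing `k(x)` pointwise and sending `y` to `y+1`. -/
def IsShiftY (σ : F2 k ≃+* F2 k) : Prop :=
  (∀ c : k, σ (Fc k c) = Fc k c) ∧ σ (Fx k) = Fx k ∧ σ (Fy k) = Fy k + 1

/-- `D` is the partial derivation `D_y = ∂/∂y` on `k(x,y)`: the `k(x)`-linear derivation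
with `D(y) = 1`. -/
def IsDerivY (D : F2 k → F2 k) : Prop :=
  (∀ a b, D (a + b) = D a + D b) ∧ (∀ a b, D (a * b) = a * D b + D a * b) ∧
  (∀ c : RatFunc k, D (FKx k c) = 0) ∧ D (Fy k) = 1

/-- `q` is not a root of unity. -/
def NotRootOfUnity (q : k) : Prop := ∀ n : ℕ, 0 < n → q ^ n ≠ 1

theorem map_sum_range_sub_sum_range {M F : Type*} [AddCommGroup M] [FunLike F M M]
    [AddMonoidHomClass F M M] (φ : F) {f : ℕ → M} (hf : ∀ j, φ (f j) = f (j + 1)) (n : ℕ) :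
    φ (∑ j ∈ Finset.range n, f j) - ∑ j ∈ Finset.range n, f j = f n - f 0 := by
  simp only [map_sum, hf, ← Finset.sum_sub_distrib, Finset.sum_range_sub]

theorem ringAut_apply_zpow_apply {R : Type*} [Mul R] [Add R] (φ : RingAut R) (i : ℤ) (a : R) :
    φ ((φ ^ i) a) = (φ ^ (i + 1)) a := by
  rw [← RingAut.mul_apply, mul_self_zpow, add_comm]

section NonUnitalNonAssocRing

variable {R : Type*} [NonUnitalNonAssocRing R]

theorem ringAut_map_sum_zpow_mul_zpow_sub_sum (φ : RingAut R) (a b : R) (m : ℕ) :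
    φ (∑ j ∈ Finset.range m, (φ ^ ((j : ℤ) - m)) a * (φ ^ (j : ℤ)) b) -
        ∑ j ∈ Finset.range m, (φ ^ ((j : ℤ) - m)) a * (φ ^ (j : ℤ)) b =
      a * (φ ^ (m : ℤ)) b - (φ ^ (-(m : ℤ))) a * b := by
  have map_summand (j : ℕ) : φ ((φ ^ ((j : ℤ) - m)) a * (φ ^ (j : ℤ)) b) =
      (φ ^ (((j + 1 : ℕ) : ℤ) - m)) a * (φ ^ ((j + 1 : ℕ) : ℤ)) b := by
    rw [map_mul, ringAut_apply_zpow_apply, ringAut_apply_zpow_apply, Nat.cast_succ,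
      sub_add_eq_add_sub]
  simpa using map_sum_range_sub_sum_range φ map_summand m

theorem stmt3_general (φ₁ φ₂ : RingAut R) (hcomm : Commute φ₁ φ₂) (a b : R) (m n : ℕ) (u v : R)
    (hu : u = ∑ j ∈ Finset.range m,
      (φ₁ ^ ((j : ℤ) - m)) a * (φ₁ ^ (j : ℤ)) ((φ₂ ^ (n : ℤ)) b))
    (hv : v = ∑ l ∈ Finset.range n,
      (φ₂ ^ ((l : ℤ) - n)) ((φ₁ ^ (-(m : ℤ))) a) * (φ₂ ^ (l : ℤ)) b) :
    a * (φ₁ ^ (m : ℤ)) ((φ₂ ^ (n : ℤ)) b) =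
      φ₁ u - u + φ₂ v - v + (φ₁ ^ (-(m : ℤ))) ((φ₂ ^ (-(n : ℤ))) a) * b := by
  have hu_sub : φ₁ u - u =
      a * (φ₁ ^ (m : ℤ)) ((φ₂ ^ (n : ℤ)) b) - (φ₁ ^ (-(m : ℤ))) a * (φ₂ ^ (n : ℤ)) b :=
    hu ▸ ringAut_map_sum_zpow_mul_zpow_sub_sum φ₁ a ((φ₂ ^ (n : ℤ)) b) m
  have hv_sub : φ₂ v - v =
      (φ₁ ^ (-(m : ℤ))) a * (φ₂ ^ (n : ℤ)) b -
        (φ₂ ^ (-(n : ℤ))) ((φ₁ ^ (-(m : ℤ))) a) * b :=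
    hv ▸ ringAut_map_sum_zpow_mul_zpow_sub_sum φ₂ ((φ₁ ^ (-(m : ℤ))) a) b n
  have swap : (φ₁ ^ (-(m : ℤ))) ((φ₂ ^ (-(n : ℤ))) a) =
      (φ₂ ^ (-(n : ℤ))) ((φ₁ ^ (-(m : ℤ))) a) :=
    RingEquiv.congr_fun (hcomm.zpow_zpow (-m) (-n)).eq a
  rw [add_sub_assoc, hu_sub, hv_sub, swap]
  abel

end NonUnitalNonAssocRing

/-- the reduction formula (5): for commuting field automorphisms
`φ₁, φ₂` of `k(x,y)`, `a, d ∈ k(x)[y]` with `d ≠ 0` and `m, n ∈ ℕ`,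
`a/φ₁^m φ₂^n(d) = φ₁(u) - u + φ₂(v) - v + φ₁^{-m}φ₂^{-n}(a)/d`, where
`u = Σ_{j=0}^{m-1} φ₁^{j-m}(a)/(φ₁^j φ₂^n(d))` and
`v = Σ_{l=0}^{n-1} φ₂^{l-n}φ₁^{-m}(a)/φ₂^l(d)`. -/
theorem stmt3 {k : Type*} [Field k] [CharZero k]
    (φ₁ φ₂ : F2 k ≃+* F2 k) (hcomm : ∀ g : F2 k, φ₁ (φ₂ g) = φ₂ (φ₁ g))
    (a d : Polynomial (RatFunc k)) (hd : d ≠ 0) (m n : ℕ)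
    (u v : F2 k)
    (hu : u = ∑ j ∈ Finset.range m,
      (φ₁ ^ ((j : ℤ) - (m : ℤ))) (FP k a) / (φ₁ ^ (j : ℤ)) ((φ₂ ^ (n : ℤ)) (FP k d)))
    (hv : v = ∑ l ∈ Finset.range n,
      (φ₂ ^ ((l : ℤ) - (n : ℤ))) ((φ₁ ^ (-(m : ℤ))) (FP k a)) / (φ₂ ^ (l : ℤ)) (FP k d)) :
    FP k a / (φ₁ ^ (m : ℤ)) ((φ₂ ^ (n : ℤ)) (FP k d)) =
      φ₁ u - u + φ₂ v - v +
        (φ₁ ^ (-(m : ℤ))) ((φ₂ ^ (-(n : ℤ))) (FP k a)) / FP k d := by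
  simp only [div_eq_mul_inv, ← map_inv₀] at hu hv ⊢
  exact stmt3_general φ₁ φ₂ (RingEquiv.ext hcomm) (FP k a) (FP k d)⁻¹ m n u v hu hv
end
end

section
/- Let φ ∈ {σ_x, τ_{x,q}} (with q ∈ k \ {0} not a root of unity in the case φ = τ_{x,q}). Every rational function f ∈ k(x,y) admits a (φ, D_y)-reduced form: there exist g, h ∈ k(x,y), finitely many a_i ∈ k(x)[y] and irreducible d_i ∈ k[x,y] with deg_y(a_i) < deg_y(d_i), the d_i lying in pairwise distinct φ-orbits, such that f = φ(g) − g + D_y(h) + Σ_{i=1}^m a_i/d_i. -/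
/-!
Work in `F = K(y)` with `K = k(x)`.

*Hermite reduction.* By partial fractions, `f` is a sum of a polynomial in `y` and of fractions
`a / d^n` with `d` irreducible over `K`. In characteristic zero polynomials are derivatives, and
`d` is coprime to `d'`, so that integrating by parts lowers `n` to `1` modulo derivatives; division
with remainder then gives `deg a < deg d`. Clearing denominators, `d` may be taken irreducible in
`k[x,y]`.

*Merging orbits.* `φ` fixes `y` and restricts to an automorphism of `K`, so its powers act on the
coefficients of `K[y]` and preserve degrees. Since `φ^t(u) - u` is always of the form `φ(g) - g`,
every fraction `a / d` can be moved to a chosen representative of the orbit of `d`, where the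
fractions of that orbit share one denominator and add up.
-/

open Polynomial

noncomputable section

variable (k : Type*) [Field k] [CharZero k]

variable {k}

theorem derivative_surjective {K : Type*} [Field K] [CharZero K] :
    Function.Surjective (derivative : K[X] → K[X]) := by
  intro p
  induction p using Polynomial.induction_on' with
  | add p q hp hq =>
    obtain ⟨P, rfl⟩ := hp
    obtain ⟨Q, rfl⟩ := hq
    exact ⟨P + Q, derivative_add⟩
  | monomial n a =>
    exact ⟨monomial (n + 1) (a / ((n : K) + 1)), by
      rw [derivative_monomial, Nat.cast_add_one, div_mul_cancel₀ _ n.cast_add_one_ne_zero,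
        Nat.add_sub_cancel]⟩

section Fractions

variable {K F : Type*} [Field K] [Field F] [Algebra K[X] F]

theorem exists_div_mul_eq_add_of_isCoprime [IsFractionRing K[X] F] {b₁ b₂ : K[X]}
    (h : IsCoprime b₁ b₂) (a : K[X]) :
    ∃ a₁ a₂ : K[X],
      algebraMap K[X] F a / algebraMap K[X] F (b₁ * b₂) =
        algebraMap K[X] F a₁ / algebraMap K[X] F b₁ +
          algebraMap K[X] F a₂ / algebraMap K[X] F b₂ := by
  rcases eq_or_ne b₁ 0 with rfl | hb₁
  · exact ⟨0, 0, by simp⟩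
  rcases eq_or_ne b₂ 0 with rfl | hb₂
  · exact ⟨0, 0, by simp⟩
  obtain ⟨u, v, huv⟩ := h
  refine ⟨a * v, a * u, ?_⟩
  rw [div_add_div _ _ (by simpa using hb₁) (by simpa using hb₂), ← map_mul, ← map_mul, ← map_mul,
    ← map_add]
  congr 2
  linear_combination (-a) * huv

theorem mem_of_div_irreducible_pow_mem [IsFractionRing K[X] F] {S : AddSubgroup F}
    (hS : ∀ d : K[X], Irreducible d → ∀ (n : ℕ) (a : K[X]),
      algebraMap K[X] F a / algebraMap K[X] F d ^ n ∈ S)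
    (f : F) : f ∈ S := by
  suffices h : ∀ b a : K[X], algebraMap K[X] F a / algebraMap K[X] F b ∈ S by
    obtain ⟨a, b, -, rfl⟩ := IsFractionRing.div_surjective (A := K[X]) f
    exact h b a
  intro b
  induction b using UniqueFactorizationMonoid.induction_on_coprime with
  | h0 => simp only [map_zero, div_zero, S.zero_mem, implies_true]
  | h1 hb =>
    obtain ⟨u, rfl⟩ := hb
    intro a
    have hu : algebraMap K[X] F ↑u⁻¹ = (algebraMap K[X] F u)⁻¹ :=
      eq_inv_of_mul_eq_one_left (by rw [← map_mul, Units.inv_mul, map_one])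
    simpa only [map_mul, hu, ← div_eq_mul_inv, pow_zero, div_one] using
      hS X irreducible_X 0 (a * ↑u⁻¹)
  | hpr n hd => simpa only [map_pow] using hS _ hd.irreducible n
  | hcp hcoprime h₁ h₂ =>
    intro a
    obtain ⟨a₁, a₂, ha⟩ := exists_div_mul_eq_add_of_isCoprime (F := F) hcoprime.isCoprime a
    exact ha ▸ add_mem (h₁ a₁) (h₂ a₂)

/-- The proper fractions with denominator `d`: the elements `a / d` of `F` with `deg a < deg d`. The
bound is on `natDegree d`, so that `0` is a proper fraction for `d = 0` as well. -/
def properFractions (F : Type*) [Field F] [Algebra K[X] F] (d : K[X]) : AddSubgroup F where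
  carrier := {u | ∃ a ∈ degreeLT K d.natDegree, u = algebraMap K[X] F a / algebraMap K[X] F d}
  zero_mem' := ⟨0, zero_mem _, by rw [map_zero, zero_div]⟩
  add_mem' := by
    rintro _ _ ⟨a, ha, rfl⟩ ⟨b, hb, rfl⟩
    exact ⟨a + b, add_mem ha hb, by rw [map_add, add_div]⟩
  neg_mem' := by
    rintro _ ⟨a, ha, rfl⟩
    exact ⟨-a, neg_mem ha, by rw [map_neg, neg_div]⟩

theorem mem_properFractions {d : K[X]} (hd : d ≠ 0) {u : F} :
    u ∈ properFractions F d ↔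
      ∃ a : K[X], a.degree < d.degree ∧ u = algebraMap K[X] F a / algebraMap K[X] F d := by
  rw [degree_eq_natDegree hd]
  simp only [← mem_degreeLT]
  exact Iff.rfl

theorem properFractions_le_of_associated {d e : K[X]} (h : Associated d e) :
    properFractions F d ≤ properFractions F e := by
  obtain ⟨u, rfl⟩ := h
  rintro _ ⟨a, ha, rfl⟩
  have hdeg (p : K[X]) : (p * u).degree = p.degree := by
    rw [degree_mul, degree_coe_units, add_zero]
  refine ⟨a * u, ?_, ?_⟩
  · rwa [mem_degreeLT, hdeg, natDegree_eq_of_degree_eq (hdeg d), ← mem_degreeLT]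
  · rw [map_mul, map_mul, mul_div_mul_right _ _ (u.isUnit.map (algebraMap K[X] F)).ne_zero]

theorem div_mem_range_sup_properFractions [IsFractionRing K[X] F] {d : K[X]} (hd : d ≠ 0)
    (a : K[X]) :
    algebraMap K[X] F a / algebraMap K[X] F d ∈
      (algebraMap K[X] F : K[X] →+ F).range ⊔ properFractions F d := by
  have hd' : algebraMap K[X] F d ≠ 0 := by simpa using hd
  have hdiv : algebraMap K[X] F a / algebraMap K[X] F d =
      algebraMap K[X] F (a / d) + algebraMap K[X] F (a % d) / algebraMap K[X] F d := by
    nth_rw 1 [← EuclideanDomain.div_add_mod a d]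
    rw [map_add, map_mul, add_div, mul_div_cancel_left₀ _ hd']
  rw [hdiv]
  exact AddSubgroup.add_mem_sup ⟨a / d, rfl⟩
    ((mem_properFractions hd).2 ⟨a % d, EuclideanDomain.mod_lt a hd, rfl⟩)

end Fractions

section Hermite

variable {K F : Type*} [Field K] [Field F] [Algebra K F] [Algebra K[X] F] [IsScalarTower K K[X] F]
  {D : Derivation K F F}

theorem derivation_apply_algebraMap (hD : D (algebraMap K[X] F X) = 1) (p : K[X]) :
    D (algebraMap K[X] F p) = algebraMap K[X] F (derivative p) := by
  have h (q : K[X]) : algebraMap K[X] F q = aeval (algebraMap K[X] F X) q := by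
    rw [aeval_algebraMap_apply, aeval_X_left_apply]
  rw [h p, D.map_aeval, hD, smul_eq_mul, mul_one, ← h]

theorem derivation_div_pow_succ [IsFractionRing K[X] F] (hD : D (algebraMap K[X] F X) = 1)
    (v : K[X]) {d : K[X]} (hd : d ≠ 0) (n : ℕ) :
    D (algebraMap K[X] F v / algebraMap K[X] F d ^ (n + 1)) =
      algebraMap K[X] F (derivative v) / algebraMap K[X] F d ^ (n + 1) -
        algebraMap K[X] F ((n + 1) * v * derivative d) / algebraMap K[X] F d ^ (n + 2) := by
  have hd' : algebraMap K[X] F d ≠ 0 := by simpa using hd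
  rw [D.leibniz_div, D.leibniz_pow, derivation_apply_algebraMap hD, derivation_apply_algebraMap hD]
  simp only [smul_eq_mul, nsmul_eq_mul, Nat.add_sub_cancel, map_mul, map_add, map_natCast, map_one,
    Nat.cast_add, Nat.cast_one]
  field_simp
  ring

variable [CharZero K]

theorem range_algebraMap_le_range_derivation (hD : D (algebraMap K[X] F X) = 1) :
    (algebraMap K[X] F : K[X] →+ F).range ≤ (D : F →+ F).range := by
  rintro _ ⟨p, rfl⟩
  obtain ⟨q, rfl⟩ := derivative_surjective p
  exact ⟨algebraMap K[X] F q, derivation_apply_algebraMap hD q⟩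

variable [IsFractionRing K[X] F]

theorem div_pow_succ_mem_range_sup_properFractions (hD : D (algebraMap K[X] F X) = 1) {d : K[X]}
    (hd : Irreducible d) (n : ℕ) (a : K[X]) :
    algebraMap K[X] F a / algebraMap K[X] F d ^ (n + 1) ∈
      (D : F →+ F).range ⊔ properFractions F d := by
  induction n generalizing a with
  | zero =>
    rw [zero_add, pow_one]
    exact sup_le_sup_right (range_algebraMap_le_range_derivation hD) _
      (div_mem_range_sup_properFractions hd.ne_zero a)
  | succ n ih =>
    obtain ⟨α, β, hαβ⟩ : IsCoprime d (derivative d) := hd.separable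
    -- With `v = aβ / (n + 1)`, the term `aβ d' / d ^ (n + 2)` is `v' / d ^ (n + 1)` minus a
    -- derivative.
    set v : K[X] := C ((n : K) + 1)⁻¹ * (a * β) with hv
    have hnv : (n + 1 : K[X]) * v = a * β := by
      rw [hv, ← mul_assoc, ← C_eq_natCast, ← C_1, ← C_add, ← C_mul,
        mul_inv_cancel₀ n.cast_add_one_ne_zero, C_1, one_mul]
    have hreduce : algebraMap K[X] F a / algebraMap K[X] F d ^ (n + 2) =
        algebraMap K[X] F (a * α + derivative v) / algebraMap K[X] F d ^ (n + 1) -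
          D (algebraMap K[X] F v / algebraMap K[X] F d ^ (n + 1)) := by
      have ha : a = a * α * d + (n + 1) * v * derivative d := by
        rw [hnv]
        linear_combination (-a) * hαβ
      have hd' : algebraMap K[X] F d ≠ 0 := by simpa using hd.ne_zero
      rw [derivation_div_pow_succ hD v hd.ne_zero]
      nth_rw 1 [ha]
      simp only [map_add, map_mul _ _ d]
      field_simp
      ring
    rw [hreduce]
    exact sub_mem (ih _) (AddSubgroup.mem_sup_left ⟨_, rfl⟩)

theorem mem_range_sup_iSup_properFractions (hD : D (algebraMap K[X] F X) = 1) (f : F) :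
    f ∈ (D : F →+ F).range ⊔ ⨆ d : {d : K[X] // Irreducible d}, properFractions F d.1 := by
  refine mem_of_div_irreducible_pow_mem (K := K) (fun d hd n a => ?_) f
  cases n with
  | zero =>
    rw [pow_zero, div_one]
    exact AddSubgroup.mem_sup_left (range_algebraMap_le_range_derivation hD ⟨a, rfl⟩)
  | succ n =>
    exact sup_le_sup_left (le_iSup (fun d : {d : K[X] // Irreducible d} => properFractions F d.1)
      ⟨d, hd⟩) _ (div_pow_succ_mem_range_sup_properFractions hD hd n a)

end Hermite

theorem exists_irreducible_associated_map {R K : Type*} [CommRing R] [IsDomain R] [WfDvdMonoid R]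
    [Field K] [Algebra R K] [IsFractionRing R K] {p : K[X]} (hp : Irreducible p) :
    ∃ e : R[X], Irreducible e ∧ Associated p (e.map (algebraMap R K)) := by
  obtain ⟨b, hb, hN⟩ := IsLocalization.integerNormalization_spec (nonZeroDivisors R) p
  set N : R[X] := IsLocalization.integerNormalization (nonZeroDivisors R) p
  have hb0 : algebraMap R K b ≠ 0 :=
    IsLocalization.to_map_ne_zero_of_mem_nonZeroDivisors K le_rfl hb
  have hpN : Associated p (N.map (algebraMap R K)) := by
    rw [hN, algebra_compatible_smul K b p, smul_eq_C_mul]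
    exact associated_unit_mul_right p _ (isUnit_C.2 hb0.isUnit)
  have hN0 : N ≠ 0 := by
    intro h0
    rw [h0, Polynomial.map_zero, associated_zero_iff_eq_zero] at hpN
    exact hp.ne_zero hpN
  -- As `p` is prime, it divides the image of one of the irreducible factors over `R` of `N`.
  obtain ⟨s, hs, hsN⟩ := WfDvdMonoid.exists_factors N hN0
  have hsK : Associated (s.map (mapRingHom (algebraMap R K))).prod (N.map (algebraMap R K)) := by
    rw [← map_multiset_prod]
    exact hsN.map (mapRingHom (algebraMap R K))
  obtain ⟨e, he, hpe⟩ := hp.prime.exists_mem_multiset_map_dvd (hpN.trans hsK.symm).dvd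
  refine ⟨e, hs e he, associated_of_dvd_dvd hpe ?_⟩
  calc e.map (algebraMap R K) ∣ N.map (algebraMap R K) :=
        Polynomial.map_dvd _ ((Multiset.dvd_prod he).trans hsN.dvd)
    _ ∣ p := hpN.symm.dvd

section Differences

variable {G A : Type*} [Group G] [AddCommGroup A] [DistribMulAction G A]

/-- The `σ`-exact elements of `A`, that is, those of the form `σ • u - u`. -/
def differences (A : Type*) [AddCommGroup A] [DistribMulAction G A] (σ : G) : AddSubgroup A :=
  (DistribSMul.toAddMonoidHom A σ - AddMonoidHom.id A).range

theorem zpow_smul_sub_mem_differences (σ : G) (t : ℤ) (u : A) :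
    σ ^ t • u - u ∈ differences A σ := by
  have hσ (v : A) : σ • v - v ∈ differences A σ := ⟨v, rfl⟩
  induction t using Int.induction_on with
  | zero => simpa only [zpow_zero, one_smul, sub_self] using zero_mem (differences A σ)
  | succ n ih =>
    have hadd := add_mem (hσ (σ ^ (n : ℤ) • u)) ih
    rwa [sub_add_sub_cancel, smul_smul, ← zpow_one_add, add_comm] at hadd
  | pred n ih =>
    have hsub := sub_mem ih (hσ (σ ^ (-(n : ℤ) - 1) • u))
    rwa [smul_smul, ← zpow_one_add, add_sub_cancel, sub_sub_sub_cancel_left] at hsub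

end Differences

section CoeffAut

variable {K F : Type*} [Field K] [Field F] [Algebra K[X] F]

/-- The automorphisms of `F` that act on `K[X]` through an automorphism of the coefficient field
`K`; for `F = k(x,y)` these are the automorphisms that fix `y` and preserve `k(x)`. -/
def coeffAut (K F : Type*) [Field K] [Field F] [Algebra K[X] F] : Subgroup (RingAut F) where
  carrier := {σ | ∃ ψ : RingAut K, ∀ p : K[X],
    σ (algebraMap K[X] F p) = algebraMap K[X] F (p.map (ψ : K →+* K))}
  one_mem' := ⟨1, fun p => by
    change _ = algebraMap K[X] F (p.map (RingHom.id K))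
    rw [Polynomial.map_id, RingAut.one_apply]⟩
  mul_mem' := by
    rintro σ τ ⟨ψ, hψ⟩ ⟨χ, hχ⟩
    refine ⟨ψ * χ, fun p => ?_⟩
    rw [RingAut.mul_apply, hχ, hψ, Polynomial.map_map]
    rfl
  inv_mem' := by
    rintro σ ⟨ψ, hψ⟩
    refine ⟨ψ⁻¹, fun p => σ.injective ?_⟩
    have hcomp : (ψ : K →+* K).comp (ψ⁻¹ : RingAut K) = RingHom.id K :=
      RingHom.ext ψ.apply_symm_apply
    rw [hψ, Polynomial.map_map, hcomp, Polynomial.map_id]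
    exact σ.apply_symm_apply _

theorem apply_mem_properFractions [IsFractionRing K[X] F] {σ : RingAut F} (hσ : σ ∈ coeffAut K F)
    {d e : K[X]} (hde : σ (algebraMap K[X] F d) = algebraMap K[X] F e) {u : F}
    (hu : u ∈ properFractions F d) : σ u ∈ properFractions F e := by
  obtain ⟨ψ, hψ⟩ := hσ
  obtain ⟨a, ha, rfl⟩ := hu
  obtain rfl : d.map (ψ : K →+* K) = e :=
    IsFractionRing.injective K[X] F ((hψ d).symm.trans hde)
  refine ⟨a.map (ψ : K →+* K), ?_, by rw [map_div₀, hψ, hψ]⟩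
  rwa [mem_degreeLT, degree_map, natDegree_map, ← mem_degreeLT]

theorem surjective_of_apply_algebraMap_eq_map [IsFractionRing K[X] F] {φ : RingAut F} {ψ : K →+* K}
    (hφ : ∀ p : K[X], φ (algebraMap K[X] F p) = algebraMap K[X] F (p.map ψ)) :
    Function.Surjective ψ := by
  intro c
  obtain ⟨u, hu⟩ := φ.surjective (algebraMap K[X] F (C c))
  obtain ⟨p, q, hq, rfl⟩ := IsFractionRing.div_surjective (A := K[X]) u
  have hq0 : q ≠ 0 := nonZeroDivisors.ne_zero hq
  have hmap : p.map ψ = C c * q.map ψ := by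
    apply IsFractionRing.injective K[X] F
    rwa [map_div₀, hφ, hφ, div_eq_iff (by simpa using hq0), ← map_mul] at hu
  have hcoeff : ψ (p.coeff q.natDegree) = c * ψ q.leadingCoeff := by
    simpa only [coeff_map, coeff_C_mul, coeff_natDegree] using congrArg (coeff · q.natDegree) hmap
  have hlead : ψ q.leadingCoeff ≠ 0 := by simpa using hq0
  exact ⟨p.coeff q.natDegree / q.leadingCoeff, by
    rw [map_div₀, hcoeff, mul_div_cancel_right₀ c hlead]⟩

theorem mem_coeffAut_of_apply_mem_fieldRange [Algebra K F] [IsScalarTower K K[X] F]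
    [IsFractionRing K[X] F] {φ : RingAut F} (hX : φ (algebraMap K[X] F X) = algebraMap K[X] F X)
    (hK : ∀ c, φ (algebraMap K F c) ∈ (algebraMap K F).fieldRange) : φ ∈ coeffAut K F := by
  let ψ : K →+* K := ((algebraMap K F).rangeRestrictFieldEquiv.symm : _ →+* K).comp
    (((φ : F →+* F).comp (algebraMap K F)).codRestrict _ hK)
  have hψ (c : K) : φ (algebraMap K[X] F (C c)) = algebraMap K[X] F (C (ψ c)) := by
    rw [← Polynomial.algebraMap_eq, ← IsScalarTower.algebraMap_apply,
      ← IsScalarTower.algebraMap_apply]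
    exact ((algebraMap K F).rangeRestrictFieldEquiv_apply_symm_apply ⟨_, hK c⟩).symm
  have hφ (p : K[X]) : φ (algebraMap K[X] F p) = algebraMap K[X] F (p.map ψ) := by
    induction p using Polynomial.induction_on' with
    | add p q hp hq => simp only [map_add, hp, hq, Polynomial.map_add]
    | monomial n c =>
      simp only [← C_mul_X_pow_eq_monomial, map_mul, map_pow, hX, hψ, Polynomial.map_mul,
        Polynomial.map_pow, map_C, map_X]
  exact ⟨RingEquiv.ofBijective ψ ⟨ψ.injective, surjective_of_apply_algebraMap_eq_map hφ⟩, hφ⟩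

end CoeffAut

theorem exists_finsupp_sum_of_mem_iSup {ι A : Type*} [AddCommGroup A] {S : ι → AddSubgroup A}
    {x : A} (hx : x ∈ ⨆ i, S i) : ∃ f : ι →₀ A, (∀ i, f i ∈ S i) ∧ x = f.sum fun _ a => a := by
  classical
  refine AddSubgroup.iSup_induction S
    (C := fun x => ∃ f : ι →₀ A, (∀ i, f i ∈ S i) ∧ x = f.sum fun _ a => a) hx (fun i x hx => ?_)
    ⟨0, fun i => zero_mem _, Finsupp.sum_zero_index.symm⟩ ?_
  · refine ⟨Finsupp.single i x, fun j => ?_, by rw [Finsupp.sum_single_index rfl]⟩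
    rw [Finsupp.single_apply]
    split_ifs with h
    · exact h ▸ hx
    · exact zero_mem _
  · rintro _ _ ⟨f, hf, rfl⟩ ⟨g, hg, rfl⟩
    exact ⟨f + g, fun i => add_mem (hf i) (hg i),
      (Finsupp.sum_add_index' (fun _ => rfl) fun _ _ _ => rfl).symm⟩

theorem exists_injective_sum_of_mem_iSup {ι A : Type*} [AddCommGroup A] {S : ι → AddSubgroup A}
    {x : A} (hx : x ∈ ⨆ i, S i) :
    ∃ (m : ℕ) (i : Fin m → ι) (y : Fin m → A),
      Function.Injective i ∧ (∀ j, y j ∈ S (i j)) ∧ x = ∑ j, y j := by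
  obtain ⟨f, hf, rfl⟩ := exists_finsupp_sum_of_mem_iSup hx
  let e := f.support.equivFin
  refine ⟨f.support.card, fun j => e.symm j, fun j => f (e.symm j),
    Subtype.val_injective.comp e.symm.injective, fun j => hf _, ?_⟩
  rw [e.symm.sum_comp fun i => f i, Finset.sum_coe_sort f.support f, Finsupp.sum]

section Orbits

variable {R K F : Type*} [CommRing R] [Field K] [Algebra R K] [Field F] [Algebra K[X] F]

/-- Two irreducible polynomials over `R` are equivalent when their images in `F` lie in the same
`φ`-orbit. The orbit need not consist of polynomials over `R`, whence the comparison in `F`. -/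
def orbitSetoid (R K : Type*) [CommRing R] [Field K] [Algebra R K] {F : Type*}
    [Field F] [Algebra K[X] F] (φ : RingAut F) : Setoid {d : R[X] // Irreducible d} :=
  (MulAction.orbitRel (Subgroup.zpowers φ) F).comap
    fun d => algebraMap K[X] F (d.1.map (algebraMap R K))

theorem orbitSetoid_iff {φ : RingAut F} {d e : {d : R[X] // Irreducible d}} :
    orbitSetoid R K φ d e ↔ ∃ t : ℤ, algebraMap K[X] F (d.1.map (algebraMap R K)) =
      (φ ^ t) (algebraMap K[X] F (e.1.map (algebraMap R K))) := by
  refine MulAction.orbitRel_apply.trans (MulAction.mem_orbit_iff.trans ?_)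
  rw [Subgroup.exists_zpowers]
  exact exists_congr fun t => eq_comm

theorem iSup_properFractions_irreducible_le [IsDomain R] [WfDvdMonoid R] [IsFractionRing R K] :
    ⨆ d : {d : K[X] // Irreducible d}, properFractions F d.1 ≤
      ⨆ d : {d : R[X] // Irreducible d}, properFractions F (d.1.map (algebraMap R K)) := by
  refine iSup_le fun ⟨d, hd⟩ => ?_
  obtain ⟨e, he, hde⟩ := exists_irreducible_associated_map (R := R) hd
  exact (properFractions_le_of_associated hde).trans (le_iSup
    (fun d : {d : R[X] // Irreducible d} => properFractions F (d.1.map (algebraMap R K))) ⟨e, he⟩)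

theorem iSup_properFractions_le_differences_sup [IsFractionRing K[X] F] {φ : RingAut F}
    (hφ : φ ∈ coeffAut K F) :
    ⨆ d : {d : R[X] // Irreducible d}, properFractions F (d.1.map (algebraMap R K)) ≤
      differences F φ ⊔
        ⨆ c : Quotient (orbitSetoid R K φ), properFractions F (c.out.1.map (algebraMap R K)) := by
  refine iSup_le fun d u hu => ?_
  obtain ⟨t, ht⟩ := orbitSetoid_iff.1 (Quotient.mk_out (s := orbitSetoid R K φ) d)
  have hmem : (φ ^ t) u ∈ properFractions F
      ((⟦d⟧ : Quotient (orbitSetoid R K φ)).out.1.map (algebraMap R K)) :=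
    apply_mem_properFractions (zpow_mem hφ t) ht.symm hu
  have hsplit : u = -((φ ^ t) u - u) + (φ ^ t) u := by ring
  rw [hsplit]
  exact AddSubgroup.add_mem_sup (neg_mem (zpow_smul_sub_mem_differences φ t u))
    (AddSubgroup.mem_iSup_of_mem _ hmem)

end Orbits

theorem stmt4_general {R K F : Type*} [CommRing R] [IsDomain R] [WfDvdMonoid R]
    [Field K] [CharZero K] [Algebra R K] [IsFractionRing R K]
    [Field F] [Algebra K F] [Algebra K[X] F] [IsScalarTower K K[X] F] [IsFractionRing K[X] F]
    (φ : F ≃+* F) (hX : φ (algebraMap K[X] F X) = algebraMap K[X] F X)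
    (hK : ∀ c, φ (algebraMap K F c) ∈ (algebraMap K F).fieldRange)
    (D : Derivation K F F) (hD : D (algebraMap K[X] F X) = 1) (f : F) :
    ∃ (g h : F) (m : ℕ) (a : Fin m → K[X]) (d : Fin m → R[X]),
      (∀ i, Irreducible (d i)) ∧
      (∀ i, (a i).degree < (d i).degree) ∧
      (∀ i i' : Fin m, ∀ t : ℤ, algebraMap K[X] F ((d i).map (algebraMap R K)) =
        (φ ^ t) (algebraMap K[X] F ((d i').map (algebraMap R K))) → i = i') ∧
      f = (φ g - g) + D h +
        ∑ i, algebraMap K[X] F (a i) / algebraMap K[X] F ((d i).map (algebraMap R K)) := by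
  have hφ : φ ∈ coeffAut K F := mem_coeffAut_of_apply_mem_fieldRange hX hK
  obtain ⟨_, ⟨h, rfl⟩, u, hu, rfl⟩ :=
    AddSubgroup.mem_sup.1 (mem_range_sup_iSup_properFractions hD f)
  obtain ⟨_, ⟨g, rfl⟩, v, hv, rfl⟩ := AddSubgroup.mem_sup.1
    (iSup_properFractions_le_differences_sup hφ (iSup_properFractions_irreducible_le (R := R) hu))
  obtain ⟨m, c, y, hc, hy, rfl⟩ := exists_injective_sum_of_mem_iSup hv
  have hne (d : {d : R[X] // Irreducible d}) : d.1.map (algebraMap R K) ≠ 0 :=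
    (Polynomial.map_ne_zero_iff (IsFractionRing.injective R K)).2 d.2.ne_zero
  choose a hdeg ha using fun i => (mem_properFractions (hne _)).1 (hy i)
  refine ⟨g, h, m, a, fun i => (c i).out.1, fun i => (c i).out.2, fun i => ?_,
    fun i j t hij => ?_, ?_⟩
  · simpa only [degree_map_eq_of_injective (IsFractionRing.injective R K)] using hdeg i
  · exact hc (Quotient.out_equiv_out.1 (orbitSetoid_iff.2 ⟨t, hij⟩))
  · simp only [← ha]
    change D h + ((φ g - g) + _) = _
    ring

section BivariateRatFunc

variable {k : Type*} [Field k]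

theorem map_ratFunc_mem_of_map_C_mem_of_map_X_mem {L : Type*} [Field L] {α : RatFunc k →+* L}
    {S : Subfield L} (hC : ∀ c, α (RatFunc.C c) ∈ S) (hX : α RatFunc.X ∈ S)
    (r : RatFunc k) : α r ∈ S := by
  have hpoly (p : k[X]) : α (algebraMap k[X] (RatFunc k) p) ∈ S := by
    induction p using Polynomial.induction_on' with
    | add p q hp hq => simpa only [map_add] using add_mem hp hq
    | monomial n c =>
      rw [← C_mul_X_pow_eq_monomial, map_mul, map_pow, RatFunc.algebraMap_C, RatFunc.algebraMap_X,
        map_mul, map_pow]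
      exact mul_mem (hC c) (pow_mem hX n)
  rw [← RatFunc.num_div_denom r, map_div₀]
  exact div_mem (hpoly _) (hpoly _)

theorem apply_FKx_mem_fieldRange_of_apply_Fx_mem {φ : F2 k ≃+* F2 k} (hc : ∀ c, φ (Fc k c) = Fc k c)
    (hx : φ (Fx k) ∈ (FKx k).fieldRange) (r : RatFunc k) : φ (FKx k r) ∈ (FKx k).fieldRange :=
  map_ratFunc_mem_of_map_C_mem_of_map_X_mem (α := (φ : F2 k →+* F2 k).comp (FKx k))
    (S := (FKx k).fieldRange) (fun c => ⟨RatFunc.C c, (hc c).symm⟩) hx r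

theorem IsShiftX.apply_FKx_mem_fieldRange {φ : F2 k ≃+* F2 k} (hφ : IsShiftX φ) (r : RatFunc k) :
    φ (FKx k r) ∈ (FKx k).fieldRange :=
  apply_FKx_mem_fieldRange_of_apply_Fx_mem hφ.1 (hφ.2.2 ▸ add_mem ⟨RatFunc.X, rfl⟩ (one_mem _)) r

theorem IsQShiftX.apply_FKx_mem_fieldRange {q : k} {φ : F2 k ≃+* F2 k} (hφ : IsQShiftX q φ)
    (r : RatFunc k) : φ (FKx k r) ∈ (FKx k).fieldRange :=
  apply_FKx_mem_fieldRange_of_apply_Fx_mem hφ.1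
    (hφ.2.2 ▸ mul_mem ⟨RatFunc.C q, rfl⟩ ⟨RatFunc.X, rfl⟩) r

/-- `D_y` as a bundled `k(x)`-linear derivation. -/
def IsDerivY.toDerivation {D : F2 k → F2 k} (hD : IsDerivY D) :
    Derivation (RatFunc k) (F2 k) (F2 k) :=
  Derivation.mk'
    { toFun := D
      map_add' := hD.1
      map_smul' := fun c f => by
        have hc : D (algebraMap (RatFunc k) (F2 k) c) = 0 := hD.2.2.1 c
        rw [Algebra.smul_def, hD.2.1, hc, zero_mul, add_zero, RingHom.id_apply, Algebra.smul_def] }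
    fun f g => by
      change D (f * g) = f * D g + g * D f
      rw [hD.2.1, mul_comm g]

end BivariateRatFunc

/-- for `φ ∈ {σ_x, τ_{x,q}}` (with `q` not a root of unity in the `q`-case),
every `f ∈ k(x,y)` admits a `(φ, D_y)`-reduced form
`f = φ(g) - g + D_y(h) + Σᵢ aᵢ/dᵢ` with `aᵢ ∈ k(x)[y]`, `dᵢ ∈ k[x,y]` irreducible in
pairwise distinct `φ`-orbits, and `deg_y(aᵢ) < deg_y(dᵢ)`. -/
theorem stmt4 {k : Type*} [Field k] [CharZero k]
    (φ : F2 k ≃+* F2 k)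
    (hφ : IsShiftX φ ∨ ∃ q : k, q ≠ 0 ∧ NotRootOfUnity q ∧ IsQShiftX q φ)
    (Dy : F2 k → F2 k) (hDy : IsDerivY Dy)
    (f : F2 k) :
    ∃ (g h : F2 k) (m : ℕ) (a : Fin m → Polynomial (RatFunc k))
      (dd : Fin m → Polynomial (Polynomial k)),
      (∀ i, Irreducible (dd i)) ∧
      (∀ i, (a i).degree < (dd i).degree) ∧
      (∀ i i' : Fin m, ∀ t : ℤ, FPP k (dd i) = (φ ^ t) (FPP k (dd i')) → i = i') ∧
      f = (φ g - g) + Dy h + ∑ i, FP k (a i) / FPP k (dd i) := by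
  rcases hφ with hφ | ⟨q, -, -, hφ⟩ <;>
    exact stmt4_general φ hφ.2.1 hφ.apply_FKx_mem_fieldRange hDy.toDerivation hDy.2.2.2 f
end
end

section
/- Let q ∈ k satisfy q^m = 1 with m minimal, and assume k contains all m-th roots of unity. Then every f ∈ k(x,y) can be decomposed as f = τ_{x,q}(g) − g + c with g ∈ k(x,y) and c ∈ k(y)(x^m); moreover, f = τ_{x,q}(g') − g' for some g' ∈ k(x,y) if and only if c = 0. -/
/-!
Write `K = k(y)(x^m)` and `L = k(x,y)`. The element `x` is a root of `T^m - x^m ∈ K[T]` and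
generates `L` over `K`, so the powers `x^n` span `L` over `K`. The operator `τ` is `K`-linear and
`x^n` is an eigenvector with eigenvalue `q^n`: if `q^n ≠ 1`, dividing by `q^n - 1` puts `x^n` in the
range of `τ - 1`, and if `q^n = 1`, then `m ∣ n` and `x^n ∈ K`. Hence `L = range (τ - 1) + K`.

The sum is direct: `τ` fixes `K` and `τ^m = 1`, so applying `1 + τ + ⋯ + τ^(m-1)` to
`c = (τ - 1) h` with `c ∈ K` gives `m c = (τ^m - 1) h = 0`. Here `m ≠ 0` in `k`, as `k` contains a
primitive `m`-th root of unity.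
-/

open Polynomial

noncomputable section

variable (k : Type*) [Field k] [CharZero k]

variable {k}

variable (k) in
/-- The subfield `k(y)(x^m)` of `k(x,y)`, generated over `k` by `y` and `x^m`. -/
def kyxm (m : ℕ) : IntermediateField k (F2 k) :=
  IntermediateField.adjoin k {Fy k, (Fx k) ^ m}

section LinearAlgebra

variable {R M : Type*} [Ring R] [AddCommGroup M] [Module R M]

theorem mem_range_sub_one_of_apply_eq_smul {T : Module.End R M} {a : R} {v : M}
    (ha : IsUnit (a - 1)) (hv : T v = a • v) : v ∈ LinearMap.range (T - 1) := by
  obtain ⟨b, hb⟩ := ha.exists_left_inv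
  refine ⟨b • v, ?_⟩
  calc (T - 1) (b • v) = (b * (a - 1)) • v := by
        rw [map_smul, LinearMap.sub_apply, hv, Module.End.one_apply, mul_smul, sub_smul, one_smul]
    _ = v := by rw [hb, one_smul]

theorem disjoint_range_sub_one_ker_sub_one {T : Module.End R M} {m : ℕ} (hT : T ^ m = 1)
    (hm : IsUnit (m : R)) : Disjoint (LinearMap.range (T - 1)) (LinearMap.ker (T - 1)) := by
  rw [Submodule.disjoint_def]
  rintro _ ⟨h, rfl⟩ hker
  set c := (T - 1) h
  have hfix : Function.IsFixedPt T c := sub_eq_zero.1 hker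
  have hmc : (m : R) • c = 0 :=
    calc (m : R) • c = ∑ i ∈ Finset.range m, (T ^ i) c := by
          simp only [Module.End.pow_apply, (hfix.iterate _).eq, Finset.sum_const,
            Finset.card_range, Nat.cast_smul_eq_nsmul]
      _ = ((∑ i ∈ Finset.range m, T ^ i) * (T - 1)) h := by
          rw [Module.End.mul_apply, LinearMap.sum_apply]
      _ = 0 := by rw [geom_sum_mul, hT, sub_self, LinearMap.zero_apply]
  exact hm.smul_eq_zero.1 hmc

end LinearAlgebra

theorem algHom_pow_eq_one_of_apply_eq_smul {R A : Type*} [CommSemiring R] [Semiring A]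
    [Algebra R A] {ζ : R} {x : A} {m : ℕ} {τ : A →ₐ[R] A} (hζ : ζ ^ m = 1) (hτ : τ x = ζ • x)
    (hx : Algebra.adjoin R {x} = ⊤) : τ ^ m = 1 := by
  have hpow (n : ℕ) : (τ ^ n) x = ζ ^ n • x := by
    induction n with
    | zero => simp
    | succ n ih => rw [pow_succ', AlgHom.mul_apply, ih, map_smul, hτ, smul_smul, pow_succ]
  refine AlgHom.ext_of_adjoin_eq_top hx fun z hz => ?_
  rw [Set.mem_singleton_iff.1 hz, hpow, hζ, one_smul, AlgHom.one_apply]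

section Kummer

variable {K L : Type*} [Field K] [CommRing L] [Algebra K L] {ζ : K} {x : L} {m : ℕ}
  {τ : L →ₐ[K] L}

theorem codisjoint_range_sub_one_bot (hζ : IsPrimitiveRoot ζ m) (hτ : τ x = ζ • x)
    (hxm : x ^ m ∈ (⊥ : Subalgebra K L)) (hx : Algebra.adjoin K {x} = ⊤) :
    Codisjoint (LinearMap.range (τ.toLinearMap - 1))
      (Subalgebra.toSubmodule (⊥ : Subalgebra K L)) := by
  rw [codisjoint_iff, eq_top_iff, ← Algebra.top_toSubmodule, ← hx, Algebra.adjoin_eq_span,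
    Submodule.span_le]
  intro z hz
  obtain ⟨n, rfl⟩ := Submonoid.mem_closure_singleton.1 hz
  by_cases hn : ζ ^ n = 1
  · obtain ⟨d, rfl⟩ := hζ.dvd_of_pow_eq_one n hn
    rw [pow_mul]
    exact Submodule.mem_sup_right (pow_mem hxm d)
  · refine Submodule.mem_sup_left
      (mem_range_sub_one_of_apply_eq_smul (sub_ne_zero.2 hn).isUnit ?_)
    rw [AlgHom.toLinearMap_apply, map_pow, hτ, _root_.smul_pow]

theorem isCompl_range_sub_one_bot (hm : 0 < m) (hζ : IsPrimitiveRoot ζ m) (hτ : τ x = ζ • x)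
    (hxm : x ^ m ∈ (⊥ : Subalgebra K L)) (hx : Algebra.adjoin K {x} = ⊤) :
    IsCompl (LinearMap.range (τ.toLinearMap - 1))
      (Subalgebra.toSubmodule (⊥ : Subalgebra K L)) := by
  refine ⟨?_, codisjoint_range_sub_one_bot hζ hτ hxm hx⟩
  have : NeZero m := ⟨hm.ne'⟩
  have hτm : τ.toLinearMap ^ m = 1 :=
    LinearMap.ext fun z => by
      rw [Module.End.pow_apply, AlgHom.coe_toLinearMap, ← AlgHom.coe_pow,
        algHom_pow_eq_one_of_apply_eq_smul hζ.pow_eq_one hτ hx]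
      rfl
  have hfix : Subalgebra.toSubmodule (⊥ : Subalgebra K L) ≤ LinearMap.ker (τ.toLinearMap - 1) := by
    intro z hz
    obtain ⟨a, rfl⟩ := Algebra.mem_bot.1 hz
    exact sub_eq_zero.2 (τ.commutes a)
  exact (disjoint_range_sub_one_ker_sub_one hτm hζ.neZero'.ne.isUnit).mono_right hfix

end Kummer

theorem adjoin_image_union_eq_top {F E L : Type*} [Field F] [Field E] [Field L] [Algebra F E]
    [Algebra E L] [Algebra F L] [IsScalarTower F E L] {S : Set E} {T : Set L}
    (hS : IntermediateField.adjoin F S = ⊤) (hT : IntermediateField.adjoin E T = ⊤) :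
    IntermediateField.adjoin F (algebraMap E L '' S ∪ T) = ⊤ := by
  set A := IntermediateField.adjoin F (algebraMap E L '' S ∪ T)
  have hE : (IsScalarTower.toAlgHom F E L).fieldRange ≤ A := by
    rw [AlgHom.fieldRange_eq_map, ← hS, IntermediateField.adjoin_map]
    exact IntermediateField.adjoin.mono _ _ _ Set.subset_union_left
  have hTA : T ⊆ A := Set.subset_union_right.trans (IntermediateField.subset_adjoin F _)
  have hle : (IntermediateField.adjoin E T).toSubfield ≤ A.toSubfield :=
    IntermediateField.adjoin_le_subfield E T (Set.range_subset_iff.2 fun e => hE ⟨e, rfl⟩) hTA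
  refine eq_top_iff.2 fun z _ => hle (?_ : z ∈ IntermediateField.adjoin E T)
  exact hT ▸ IntermediateField.mem_top

section RationalFunctions

variable (k : Type*) [Field k]

theorem adjoin_Fx_Fy_eq_top : IntermediateField.adjoin k {Fx k, Fy k} = ⊤ := by
  have h := adjoin_image_union_eq_top (RatFunc.adjoin_X (K := k))
    (RatFunc.adjoin_X (K := RatFunc k))
  rwa [Set.image_singleton, Set.singleton_union] at h

variable (m : ℕ)

theorem Fx_pow_mem_kyxm : Fx k ^ m ∈ kyxm k m :=
  IntermediateField.subset_adjoin _ _ (Set.mem_insert_of_mem _ rfl)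

theorem Fy_mem_kyxm : Fy k ∈ kyxm k m :=
  IntermediateField.subset_adjoin _ _ (Set.mem_insert _ _)

variable {m}

theorem adjoin_kyxm_Fx_eq_top (hm : 0 < m) : Algebra.adjoin (kyxm k m) {Fx k} = ⊤ := by
  have hint : IsIntegral (kyxm k m) (Fx k) :=
    .of_pow hm (isIntegral_algebraMap (x := (⟨Fx k ^ m, Fx_pow_mem_kyxm k m⟩ : kyxm k m)))
  rw [← IntermediateField.adjoin_simple_eq_top_iff_of_isAlgebraic hint.isAlgebraic,
    ← IntermediateField.restrictScalars_eq_top_iff (K := k), eq_top_iff, ← adjoin_Fx_Fy_eq_top k,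
    IntermediateField.restrictScalars_adjoin]
  refine IntermediateField.adjoin.mono _ _ _ ?_
  rintro _ (rfl | rfl)
  · exact Set.mem_union_right _ rfl
  · exact Set.mem_union_left _ (Fy_mem_kyxm k m)

variable {k} {q : k} {τ : F2 k ≃+* F2 k}

theorem algebraMap_eq_Fc (a : k) : algebraMap k (F2 k) a = Fc k a := by
  rw [IsScalarTower.algebraMap_apply k (RatFunc k) (F2 k)]
  rfl

theorem IsQShiftX.map_eq_self_of_mem_kyxm (hτ : IsQShiftX q τ) (hq : q ^ m = 1) {c : F2 k}
    (hc : c ∈ kyxm k m) : τ c = c := by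
  obtain ⟨hτk, hτy, hτx⟩ := hτ
  induction hc using IntermediateField.adjoin_induction with
  | mem z hz =>
    rcases hz with rfl | rfl
    · exact hτy
    · rw [map_pow, hτx, mul_pow, ← map_pow, hq, map_one, one_mul]
  | algebraMap a => rw [algebraMap_eq_Fc, hτk]
  | add a b _ _ ha hb => rw [map_add, ha, hb]
  | inv a _ ha => rw [map_inv₀, ha]
  | mul a b _ _ ha hb => rw [map_mul, ha, hb]

/-- The `q`-shift as a `k(y)(x^m)`-algebra endomorphism of `k(x,y)`, for `q` an `m`-th root of
unity. -/
def IsQShiftX.toAlgHom (hτ : IsQShiftX q τ) (hq : q ^ m = 1) : F2 k →ₐ[kyxm k m] F2 k where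
  toRingHom := τ
  commutes' c := hτ.map_eq_self_of_mem_kyxm hq c.2

theorem IsQShiftX.isCompl_range_sub_one_bot (hτ : IsQShiftX q τ) (hm : 0 < m)
    (hq : IsPrimitiveRoot q m) :
    IsCompl (LinearMap.range ((hτ.toAlgHom hq.pow_eq_one).toLinearMap - 1))
      (Subalgebra.toSubmodule (⊥ : Subalgebra (kyxm k m) (F2 k))) := by
  refine _root_.isCompl_range_sub_one_bot (x := Fx k) hm
    (hq.map_of_injective (algebraMap k (kyxm k m)).injective) ?_
    (Algebra.mem_bot.2 ⟨⟨_, Fx_pow_mem_kyxm k m⟩, rfl⟩) (adjoin_kyxm_Fx_eq_top k hm)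
  calc τ (Fx k) = algebraMap k (F2 k) q * Fx k := by rw [hτ.2.2, algebraMap_eq_Fc]
    _ = algebraMap k (kyxm k m) q • Fx k := by rw [algebraMap_smul, Algebra.smul_def]

end RationalFunctions

theorem stmt8_general {k : Type*} [Field k] {q : k} {m : ℕ} (hm : 0 < m)
    (hq : IsPrimitiveRoot q m) {τ : F2 k ≃+* F2 k} (hτ : IsQShiftX q τ) (f : F2 k) :
    (∃ (g c : F2 k), c ∈ kyxm k m ∧ f = τ g - g + c) ∧
    (∀ g c : F2 k, c ∈ kyxm k m → f = τ g - g + c →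
      ((∃ g' : F2 k, f = τ g' - g') ↔ c = 0)) := by
  have hcompl := hτ.isCompl_range_sub_one_bot hm hq
  refine ⟨?_, fun g c hc hf => ⟨?_, fun hc0 => ⟨g, by rw [hf, hc0, add_zero]⟩⟩⟩
  · obtain ⟨_, c, ⟨g, rfl⟩, hc, hf⟩ :=
      Submodule.codisjoint_iff_exists_add_eq.1 hcompl.codisjoint f
    obtain ⟨a, rfl⟩ := Algebra.mem_bot.1 hc
    exact ⟨g, a, a.2, hf.symm⟩
  · rintro ⟨g', hg'⟩
    have hrange : τ (g' - g) - (g' - g) = c := by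
      rw [map_sub]
      linear_combination hf - hg'
    exact Submodule.disjoint_def.1 hcompl.disjoint c ⟨g' - g, hrange⟩
      (Algebra.mem_bot.2 ⟨⟨c, hc⟩, rfl⟩)

/-- Lemma 2(b): let `q ∈ k` satisfy `q^m = 1` with `m` minimal, and assume
`k` contains all `m`-th roots of unity. Every `f ∈ k(x,y)` can be decomposed as
`f = τ_{x,q}(g) - g + c` with `g ∈ k(x,y)` and `c ∈ k(y)(x^m)`; moreover, for any such
decomposition, `f` is `τ_{x,q}`-summable (i.e. `f = τ_{x,q}(g') - g'` for some `g'`)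
iff `c = 0`. -/
theorem stmt8 {k : Type*} [Field k] [CharZero k]
    (q : k) (m : ℕ) (hm : 0 < m) (hq : q ^ m = 1)
    (hmin : ∀ n : ℕ, 0 < n → q ^ n = 1 → m ≤ n)
    (hall : Multiset.card ((X ^ m - C 1 : Polynomial k).roots) = m)
    (τ : F2 k ≃+* F2 k) (hτ : IsQShiftX q τ)
    (f : F2 k) :
    (∃ (g c : F2 k), c ∈ kyxm k m ∧ f = τ g - g + c) ∧
    (∀ g c : F2 k, c ∈ kyxm k m → f = τ g - g + c →
      ((∃ g' : F2 k, f = τ g' - g') ↔ c = 0)) :=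
  stmt8_general hm (.mk_of_lt q hm hq fun n hn hnm h => (hmin n hn h).not_gt hnm) hτ f
end
end

section
/- Let q ∈ k satisfy q^m = 1 with m minimal, and assume k contains all m-th roots of unity. Let f ∈ k(x,y) and suppose f = τ_{x,q}(g) − g + c with g ∈ k(x,y) and c ∈ k(y)(x^m). Then f is exact with respect to (τ_{x,q}, D_y), i.e., f = Δ_{x,q}(u) + D_y(v) for some u, v ∈ k(x,y), if and only if c = D_y(d) for some d ∈ k(y)(x^m). -/
open Polynomial

noncomputable section

variable (k : Type*) [Field k] [CharZero k]

variable {k}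

/-!
Since `q` is a primitive `m`-th root of unity, the extension `k(x,y) / k(y)(x^m)` is a Kummer
extension whose Galois group consists of the powers of `τ`. Thus `τ^m = 1`, and `k(y)(x^m)` is
exactly the field of elements fixed by `τ`.

Let `T = 1 + τ + ⋯ + τ^(m-1)`. From `T (τ - 1) = (τ - 1) T = τ^m - 1 = 0` we see that `T` kills the
image of `τ - 1` and takes values in the fixed field; it multiplies fixed elements by `m`, and it
commutes with every operator that commutes with `τ`, in particular with `D_y`. Applying `T` to
`τ g - g + c = τ u - u + D_y v` therefore gives `m c = D_y (T v)`.
-/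

section OrbitSum

variable {R M : Type*} [CommRing R] [AddCommGroup M] [Module R M]

/-- The operator `1 + τ + ⋯ + τ^(m-1)`. When `τ` has order `m` it is the trace from `M` to the fixed
points of `τ`. -/
def orbitSum (τ : Module.End R M) (m : ℕ) : Module.End R M :=
  ∑ i ∈ Finset.range m, τ ^ i

variable {τ D : Module.End R M} {m : ℕ}

lemma orbitSum_apply_sub (hτ : τ ^ m = 1) (u : M) : orbitSum τ m (τ u - u) = 0 := by
  have h : orbitSum τ m * (τ - 1) = 0 := by rw [orbitSum, geom_sum_mul, hτ, sub_self]
  exact LinearMap.congr_fun h u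

lemma apply_orbitSum (hτ : τ ^ m = 1) (v : M) : τ (orbitSum τ m v) = orbitSum τ m v := by
  have h : (τ - 1) * orbitSum τ m = 0 := by rw [orbitSum, mul_geom_sum, hτ, sub_self]
  exact sub_eq_zero.1 (LinearMap.congr_fun h v)

lemma orbitSum_apply_of_fixed {c : M} (hc : τ c = c) : orbitSum τ m c = (m : R) • c := by
  simp [orbitSum, LinearMap.sum_apply, Module.End.pow_apply, Function.iterate_fixed hc,
    Nat.cast_smul_eq_nsmul]

lemma commute_orbitSum (h : Commute τ D) (m : ℕ) : Commute (orbitSum τ m) D :=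
  Commute.sum_left _ _ _ fun i _ => h.pow_left i

theorem exists_eq_sub_add_iff_exists_fixed (hτ : τ ^ m = 1) (hD : Commute τ D)
    (hm : IsUnit (m : R)) {f g c : M} (hc : τ c = c) (hf : f = τ g - g + c) :
    (∃ u v, f = τ u - u + D v) ↔ ∃ d, τ d = d ∧ c = D d := by
  constructor
  · rintro ⟨u, v, huv⟩
    have hmc : (m : R) • c = D (orbitSum τ m v) :=
      calc (m : R) • c = orbitSum τ m f := by
            rw [hf, map_add, orbitSum_apply_sub hτ, zero_add, orbitSum_apply_of_fixed hc]
        _ = orbitSum τ m (D v) := by rw [huv, map_add, orbitSum_apply_sub hτ, zero_add]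
        _ = D (orbitSum τ m v) := LinearMap.congr_fun (commute_orbitSum hD m) v
    obtain ⟨n, hn⟩ := hm.exists_left_inv
    refine ⟨n • orbitSum τ m v, by rw [map_smul, apply_orbitSum hτ], ?_⟩
    rw [map_smul, ← hmc, smul_smul, hn, one_smul]
  · rintro ⟨d, -, rfl⟩
    exact ⟨g, d, hf⟩

end OrbitSum

section Adjoin

variable {F K : Type*} [Field F] [Field K] [Algebra F K] {S : Set K}

lemma algEquiv_ext_of_adjoin_eq_top (hS : IntermediateField.adjoin F S = ⊤) {φ ψ : K ≃ₐ[F] K}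
    (h : Set.EqOn φ ψ S) : φ = ψ := by
  have hfix : ∀ v ∈ IntermediateField.adjoin F S, (ψ⁻¹ * φ) • v = v :=
    (IntermediateField.forall_mem_adjoin_smul_eq_self_iff F _).2 fun s hs =>
      ψ.symm_apply_eq.2 (h hs)
  ext v
  exact ψ.symm_apply_eq.1 (hfix v (hS ▸ IntermediateField.mem_top))

lemma derivation_comm_algHom_of_adjoin_eq_top (hS : IntermediateField.adjoin F S = ⊤)
    (D : Derivation F K K) (φ : K →ₐ[F] K) (h : ∀ s ∈ S, D (φ s) = φ (D s)) (v : K) :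
    D (φ v) = φ (D v) := by
  have hv : v ∈ IntermediateField.adjoin F S := hS ▸ IntermediateField.mem_top
  induction hv using IntermediateField.adjoin_induction with
  | mem s hs => exact h s hs
  | algebraMap a => simp only [AlgHom.commutes, Derivation.map_algebraMap, map_zero]
  | add a b _ _ ha hb => simp only [map_add, ha, hb]
  | inv a _ ha =>
    simp only [map_inv₀, Derivation.leibniz_inv, ha, smul_eq_mul, map_mul, map_neg, map_pow]
  | mul a b _ _ ha hb => simp only [map_mul, map_add, Derivation.leibniz, ha, hb, smul_eq_mul]

lemma adjoin_union_image_algebraMap_eq_top {E : Type*} [Field E] [Algebra F E] [Algebra E K]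
    [IsScalarTower F E K] {T : Set E} (hT : IntermediateField.adjoin F T = ⊤)
    (hS : IntermediateField.adjoin E S = ⊤) :
    IntermediateField.adjoin F (S ∪ algebraMap E K '' T) = ⊤ := by
  set L := IntermediateField.adjoin F (S ∪ algebraMap E K '' T)
  have hE (a : E) : algebraMap E K a ∈ L := by
    have hT' : (IntermediateField.adjoin F T).map (IsScalarTower.toAlgHom F E K) ≤ L := by
      rw [IntermediateField.adjoin_map]
      exact IntermediateField.adjoin.mono _ _ _ Set.subset_union_right
    exact hT' ⟨a, hT ▸ IntermediateField.mem_top, rfl⟩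
  refine eq_top_iff.2 fun v _ => ?_
  have hv : v ∈ IntermediateField.adjoin E S := hS ▸ IntermediateField.mem_top
  induction hv using IntermediateField.adjoin_induction with
  | mem s hs => exact IntermediateField.subset_adjoin _ _ (Or.inl hs)
  | algebraMap a => exact hE a
  | add a b _ _ ha hb => exact add_mem (ha trivial) (hb trivial)
  | inv a _ ha => exact inv_mem (ha trivial)
  | mul a b _ _ ha hb => exact mul_mem (ha trivial) (hb trivial)

end Adjoin

section Kummer

variable {F K : Type*} [Field F] [Field K] [Algebra F K] {S : Set K} {x : K} {q : F} {m : ℕ}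

lemma isGalois_of_adjoin_root_eq_top [NeZero m] (hq : IsPrimitiveRoot q m) {a : F} (ha : a ≠ 0)
    (hx : x ^ m = algebraMap F K a) (hgen : IntermediateField.adjoin F {x} = ⊤) :
    IsGalois F K := by
  have hm : (m : F) ≠ 0 := hq.neZero'.out
  have hroot : x ∈ (X ^ m - C a : F[X]).rootSet K := by
    simp [mem_rootSet_of_ne (X_pow_sub_C_ne_zero (NeZero.pos m) a), hx]
  have : (X ^ m - C a : F[X]).IsSplittingField F K := by
    refine isSplittingField_iff_intermediateField.2 ⟨?_, ?_⟩
    · simpa using X_pow_sub_C_splits_of_isPrimitiveRoot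
        (hq.map_of_injective (algebraMap F K).injective) hx
    · exact eq_top_iff.2 (hgen ▸ IntermediateField.adjoin.mono _ _ _ (by simpa using hroot))
  exact IsGalois.of_separable_splitting_field (separable_X_pow_sub_C a hm ha)

lemma exists_eq_pow_smul_of_pow_eq [NeZero m] (hq : IsPrimitiveRoot q m) {z : K} (hx₀ : x ≠ 0)
    (h : z ^ m = x ^ m) : ∃ i, z = q ^ i • x := by
  have hone : (z / x) ^ m = 1 := by rw [div_pow, h, div_self (pow_ne_zero m hx₀)]
  obtain ⟨i, -, hi⟩ :=
    (hq.map_of_injective (algebraMap F K).injective).eq_pow_of_pow_eq_one hone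
  exact ⟨i, by rw [Algebra.smul_def, map_pow, hi, div_mul_cancel₀ z hx₀]⟩

variable {τ : K ≃ₐ[F] K}

lemma algEquiv_pow_apply_of_apply_eq_self {v : K} (hv : τ v = v) (i : ℕ) : (τ ^ i) v = v := by
  rw [AlgEquiv.coe_pow, Function.iterate_fixed hv]

lemma algEquiv_pow_apply_of_apply_eq_smul (hx : τ x = q • x) (i : ℕ) :
    (τ ^ i) x = q ^ i • x := by
  induction i with
  | zero => simp
  | succ i ih => rw [pow_succ', AlgEquiv.mul_apply, ih, map_smul, hx, smul_smul, pow_succ]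

lemma algEquiv_pow_eq_one (hq : q ^ m = 1) (hgen : IntermediateField.adjoin F (S ∪ {x}) = ⊤)
    (hS : ∀ s ∈ S, τ s = s) (hx : τ x = q • x) : τ ^ m = 1 := by
  refine algEquiv_ext_of_adjoin_eq_top hgen ?_
  rintro s (hs | rfl)
  · exact algEquiv_pow_apply_of_apply_eq_self (hS s hs) m
  · rw [algEquiv_pow_apply_of_apply_eq_smul hx, hq, one_smul, AlgEquiv.one_apply]

lemma apply_eq_self_of_mem_adjoin_pow (hq : q ^ m = 1) (hS : ∀ s ∈ S, τ s = s)
    (hx : τ x = q • x) {v : K} (hv : v ∈ IntermediateField.adjoin F (S ∪ {x ^ m})) :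
    τ v = v := by
  refine (IntermediateField.forall_mem_adjoin_smul_eq_self_iff F τ).2 ?_ v hv
  rintro s (hs | rfl)
  · exact hS s hs
  · rw [AlgEquiv.smul_def, map_pow, hx, _root_.smul_pow, hq, one_smul]

variable [NeZero m]

lemma exists_eq_pow_of_map_pow_eq (hq : IsPrimitiveRoot q m)
    (hgen : IntermediateField.adjoin F (S ∪ {x}) = ⊤) (hx₀ : x ≠ 0) (hS : ∀ s ∈ S, τ s = s)
    (hx : τ x = q • x) {φ : K ≃ₐ[F] K} (hφS : ∀ s ∈ S, φ s = s) (hφx : φ (x ^ m) = x ^ m) :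
    ∃ i, φ = τ ^ i := by
  obtain ⟨i, hi⟩ := exists_eq_pow_smul_of_pow_eq hq hx₀ ((map_pow φ x m).symm.trans hφx)
  refine ⟨i, algEquiv_ext_of_adjoin_eq_top hgen ?_⟩
  rintro s (hs | rfl)
  · rw [hφS s hs, algEquiv_pow_apply_of_apply_eq_self (hS s hs)]
  · rw [hi, algEquiv_pow_apply_of_apply_eq_smul hx]

lemma isGalois_adjoin_pow (hq : IsPrimitiveRoot q m)
    (hgen : IntermediateField.adjoin F (S ∪ {x}) = ⊤) (hx₀ : x ≠ 0) :
    IsGalois (IntermediateField.adjoin F (S ∪ {x ^ m})) K := by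
  set L := IntermediateField.adjoin F (S ∪ {x ^ m})
  have hSL : S ∪ {x ^ m} ⊆ L := IntermediateField.subset_adjoin _ _
  have hgenL : IntermediateField.adjoin L {x} = ⊤ := by
    rw [← IntermediateField.restrictScalars_eq_top_iff (K := F),
      IntermediateField.restrictScalars_adjoin, eq_top_iff, ← hgen]
    exact IntermediateField.adjoin.mono _ _ _
      (Set.union_subset_union_left _ (Set.subset_union_left.trans hSL))
  let a : L := ⟨x ^ m, hSL (Or.inr rfl)⟩
  have ha : a ≠ 0 := Subtype.coe_ne_coe.1 (pow_ne_zero m hx₀)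
  exact isGalois_of_adjoin_root_eq_top (hq.map_of_injective (algebraMap F L).injective) ha rfl hgenL

theorem apply_eq_self_iff_mem_adjoin_pow (hq : IsPrimitiveRoot q m)
    (hgen : IntermediateField.adjoin F (S ∪ {x}) = ⊤) (hx₀ : x ≠ 0) (hS : ∀ s ∈ S, τ s = s)
    (hx : τ x = q • x) {v : K} :
    τ v = v ↔ v ∈ IntermediateField.adjoin F (S ∪ {x ^ m}) := by
  refine ⟨fun hv => ?_, apply_eq_self_of_mem_adjoin_pow hq.pow_eq_one hS hx⟩
  set L := IntermediateField.adjoin F (S ∪ {x ^ m})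
  have hSL : S ∪ {x ^ m} ⊆ L := IntermediateField.subset_adjoin _ _
  have : IsGalois L K := isGalois_adjoin_pow hq hgen hx₀
  have hfix (φ : K ≃ₐ[L] K) : φ v = v := by
    obtain ⟨i, hi⟩ := exists_eq_pow_of_map_pow_eq hq hgen hx₀ hS hx (φ := φ.restrictScalars F)
      (fun s hs => φ.commutes ⟨s, hSL (Or.inl hs)⟩) (φ.commutes ⟨x ^ m, hSL (Or.inr rfl)⟩)
    exact (AlgEquiv.congr_fun hi v).trans (algEquiv_pow_apply_of_apply_eq_self hv i)
  obtain ⟨l, rfl⟩ := (InfiniteGalois.mem_range_algebraMap_iff_fixed v).2 hfix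
  exact l.2

theorem stmt9_general (hq : IsPrimitiveRoot q m)
    (hgen : IntermediateField.adjoin F (S ∪ {x}) = ⊤) (hx₀ : x ≠ 0) (hS : ∀ s ∈ S, τ s = s)
    (hx : τ x = q • x) {D : K →ₗ[F] K} (hD : ∀ v, D (τ v) = τ (D v))
    {f g c : K} (hc : c ∈ IntermediateField.adjoin F (S ∪ {x ^ m})) (hf : f = τ g - g + c) :
    (∃ u v, f = τ u - u + D v) ↔
      ∃ d, d ∈ IntermediateField.adjoin F (S ∪ {x ^ m}) ∧ c = D d := by
  have hfix {v : K} := apply_eq_self_iff_mem_adjoin_pow hq hgen hx₀ hS hx (v := v)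
  have hpow : τ.toLinearMap ^ m = 1 := by
    rw [← AlgEquiv.pow_toLinearMap, algEquiv_pow_eq_one hq.pow_eq_one hgen hS hx]
    rfl
  have hcomm : Commute τ.toLinearMap D := LinearMap.ext fun v => (hD v).symm
  have hm : (m : F) ≠ 0 := hq.neZero'.out
  simp only [← hfix] at hc ⊢
  exact exists_eq_sub_add_iff_exists_fixed hpow hcomm hm.isUnit hc hf

end Kummer

section RationalFunctions

variable {k : Type*} [Field k] {q : k} {σ : F2 k ≃+* F2 k} {D : F2 k → F2 k}

lemma Fx_ne_zero : Fx k ≠ 0 := by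
  simp [Fx, RatFunc.X_ne_zero]

lemma adjoin_Fy_Fx : IntermediateField.adjoin k ({Fy k} ∪ {Fx k}) = ⊤ := by
  have h := adjoin_union_image_algebraMap_eq_top (K := F2 k)
    (RatFunc.adjoin_X (K := k)) (RatFunc.adjoin_X (K := RatFunc k))
  rwa [Set.image_singleton] at h

namespace IsQShiftX

/-- The `q`-shift operator `τ_{x,q}` as an automorphism of the `k`-algebra `k(x,y)`. -/
def algEquiv (hσ : IsQShiftX q σ) : F2 k ≃ₐ[k] F2 k :=
  AlgEquiv.ofRingEquiv (f := σ) hσ.1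

lemma algEquiv_Fy (hσ : IsQShiftX q σ) : hσ.algEquiv (Fy k) = Fy k :=
  hσ.2.1

lemma algEquiv_Fx (hσ : IsQShiftX q σ) : hσ.algEquiv (Fx k) = q • Fx k :=
  hσ.2.2.trans (Algebra.smul_def q (Fx k)).symm

end IsQShiftX

namespace IsDerivY

/-- The partial derivation `D_y` as a derivation of the `k`-algebra `k(x,y)`; only its linearity
over `k` is recorded, since `τ_{x,q}` is not `k(x)`-linear. -/
def derivation (hD : IsDerivY D) : Derivation k (F2 k) (F2 k) :=
  .mk'
    { toFun := D
      map_add' := hD.1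
      map_smul' := fun a v => by
        have ha : D (algebraMap k (F2 k) a) = 0 := hD.2.2.1 (RatFunc.C a)
        rw [RingHom.id_apply, Algebra.smul_def, Algebra.smul_def, hD.2.1, ha, zero_mul, add_zero] }
    fun a b => (hD.2.1 a b).trans (by rw [mul_comm (D a)]; rfl)

lemma derivation_Fy (hD : IsDerivY D) : hD.derivation (Fy k) = 1 :=
  hD.2.2.2

lemma derivation_Fx (hD : IsDerivY D) : hD.derivation (Fx k) = 0 :=
  hD.2.2.1 RatFunc.X

lemma derivation_comm_qShift (hD : IsDerivY D) (hσ : IsQShiftX q σ) (v : F2 k) :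
    hD.derivation (hσ.algEquiv v) = hσ.algEquiv (hD.derivation v) := by
  refine derivation_comm_algHom_of_adjoin_eq_top adjoin_Fy_Fx hD.derivation
    hσ.algEquiv.toAlgHom ?_ v
  rintro s (rfl | rfl)
  · change hD.derivation (hσ.algEquiv (Fy k)) = hσ.algEquiv (hD.derivation (Fy k))
    rw [hσ.algEquiv_Fy, hD.derivation_Fy, map_one]
  · change hD.derivation (hσ.algEquiv (Fx k)) = hσ.algEquiv (hD.derivation (Fx k))
    rw [hσ.algEquiv_Fx, Derivation.map_smul, hD.derivation_Fx, map_zero, smul_zero]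

end IsDerivY

end RationalFunctions

/-- Theorem 1, case `∂_y = D_y`: let `q ∈ k` satisfy `q^m = 1` with `m`
minimal, and assume `k` contains all `m`-th roots of unity. Let `f ∈ k(x,y)` with
`f = τ_{x,q}(g) - g + c`, `c ∈ k(y)(x^m)`. Then `f` is exact with respect to
`(τ_{x,q}, D_y)`, i.e. `f = Δ_{x,q}(u) + D_y(v)` for some `u, v ∈ k(x,y)`, iff
`c = D_y(d)` for some `d ∈ k(y)(x^m)`. -/
theorem stmt9 {k : Type*} [Field k] [CharZero k]
    (q : k) (m : ℕ) (hm : 0 < m) (hq : q ^ m = 1)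
    (hmin : ∀ n : ℕ, 0 < n → q ^ n = 1 → m ≤ n)
    (hall : Multiset.card ((X ^ m - C 1 : Polynomial k).roots) = m)
    (τ : F2 k ≃+* F2 k) (hτ : IsQShiftX q τ)
    (Dy : F2 k → F2 k) (hDy : IsDerivY Dy)
    (f g c : F2 k) (hc : c ∈ kyxm k m) (hf : f = τ g - g + c) :
    (∃ u v : F2 k, f = (τ u - u) + Dy v) ↔
    (∃ d : F2 k, d ∈ kyxm k m ∧ c = Dy d) := by
  have : NeZero m := ⟨hm.ne'⟩
  have hprim : IsPrimitiveRoot q m :=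
    .mk_of_lt q hm hq fun n hn hnm hqn => (hmin n hn hqn).not_gt hnm
  exact stmt9_general hprim adjoin_Fy_Fx Fx_ne_zero (fun _ hs => hs ▸ hτ.algEquiv_Fy)
    hτ.algEquiv_Fx (D := hDy.derivation.toLinearMap) (hDy.derivation_comm_qShift hτ) hc hf
end
end

section
/- Let q ∈ k \ {0} be not a root of unity and let p ∈ k[x,y] be an irreducible polynomial. If τ_{x,q}^i σ_y^j(p) = p for some integers i, j with i ≠ 0, then p ∈ k[y]. -/
/-!
Write `p = ∑ₙ cₙ(y) xⁿ`. Invariance under `x ↦ qⁱx`, `y ↦ y + j` means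
`qⁱⁿ cₙ(y + j) = cₙ(y)` for every `n`. The substitution `y ↦ y + j` preserves leading
coefficients, so `cₙ ≠ 0` forces `qⁱⁿ = 1`, and hence `n = 0` because `q` is not a root of
unity and `i ≠ 0`. Thus `p = c₀(y)`.
-/

open Polynomial

noncomputable section

variable (k : Type*) [Field k] [CharZero k]

variable {k}

section DilateTranslate

variable {R : Type*} [CommSemiring R]

/-- The substitution `x ↦ a x`, `y ↦ y + b` on `R[y][x]`. The outer variable is `x`, not `y` as
in `FPP`, so that `Polynomial.coeff` extracts the coefficients in `x`. -/
def dilateTranslate (a b : R) : R[X][X] →+* R[X][X] :=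
  (compRingHom (C (C a) * X)).comp (mapRingHom (taylorAlgHom b : R[X] →+* R[X]))

lemma dilateTranslate_C_C (a b c : R) : dilateTranslate a b (C (C c)) = C (C c) := by
  simp [dilateTranslate]

lemma dilateTranslate_C_X (a b : R) : dilateTranslate a b (C X) = C X + C (C b) := by
  simp [dilateTranslate]

lemma dilateTranslate_X (a b : R) : dilateTranslate a b X = C (C a) * X := by
  simp [dilateTranslate]

lemma coeff_dilateTranslate (a b : R) (r : R[X][X]) (n : ℕ) :
    (dilateTranslate a b r).coeff n = taylor b (r.coeff n) * C (a ^ n) := by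
  simp [dilateTranslate, comp_C_mul_X_coeff]

lemma eq_C_of_dilateTranslate_eq_self [IsCancelMulZero R] {a b : R} (ha : ¬IsOfFinOrder a)
    {r : R[X][X]} (hr : dilateTranslate a b r = r) : r = C (r.coeff 0) := by
  refine eq_C_of_natDegree_eq_zero (by_contra fun hdeg ↦ ha ?_)
  set n := r.natDegree
  have hn : 0 < n := Nat.pos_of_ne_zero hdeg
  have hcoeff : r.coeff n ≠ 0 := leadingCoeff_ne_zero.2 (ne_zero_of_natDegree_gt hn)
  have hlead : (r.coeff n).leadingCoeff = (r.coeff n).leadingCoeff * a ^ n := by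
    conv_lhs => rw [← hr, coeff_dilateTranslate, leadingCoeff_mul, leadingCoeff_taylor,
      leadingCoeff_C]
  exact isOfFinOrder_iff_pow_eq_one.2 ⟨n, hn,
    (left_eq_mul₀ (leadingCoeff_ne_zero.2 hcoeff)).1 hlead⟩

end DilateTranslate

lemma not_isOfFinOrder_zpow {G : Type*} [DivisionMonoid G] {g : G} (hg : ¬IsOfFinOrder g) {i : ℤ}
    (hi : i ≠ 0) : ¬IsOfFinOrder (g ^ i) := by
  have hpow : ¬IsOfFinOrder (g ^ i.natAbs) := fun h ↦ hg (h.of_pow (Int.natAbs_ne_zero.2 hi))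
  rcases Int.natAbs_eq i with h | h
  · rwa [h, zpow_natCast]
  · rw [h, zpow_neg, zpow_natCast]
    simpa only [isOfFinOrder_iff_pow_eq_one, inv_pow, inv_eq_one] using hpow

section FunctionField

variable {K : Type*} [Field K]

lemma notRootOfUnity_iff_not_isOfFinOrder {q : K} : NotRootOfUnity q ↔ ¬IsOfFinOrder q := by
  simp [NotRootOfUnity, isOfFinOrder_iff_pow_eq_one]

lemma FPP_C_C (c : K) : FPP K (C (C c)) = Fc K c := by
  simp [FPP, FP, PP, Fc]

lemma FPP_C_X : FPP K (C X) = Fx K := by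
  simp [FPP, FP, PP, Fx]

lemma FPP_X : FPP K X = Fy K := by
  simp [FPP, FP, PP, Fy]

lemma FPP_injective : Function.Injective (FPP K) :=
  (RatFunc.algebraMap_injective (RatFunc K)).comp
    (map_injective _ (RatFunc.algebraMap_injective K))

/-- `φ` is the automorphism `f(x, y) ↦ f(a x, y + b)` of `K(x,y)`. Both `τ_{x,q}` (`a = q`,
`b = 0`) and `σ_y` (`a = b = 1`) are of this form, and the form is stable under composition. -/
def IsDilateTranslate (a b : K) (φ : F2 K ≃+* F2 K) : Prop :=
  (∀ c : K, φ (Fc K c) = Fc K c) ∧ φ (Fx K) = Fc K a * Fx K ∧ φ (Fy K) = Fy K + Fc K b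

lemma IsQShiftX.isDilateTranslate {q : K} {τ : F2 K ≃+* F2 K} (hτ : IsQShiftX q τ) :
    IsDilateTranslate q 0 τ :=
  ⟨hτ.1, hτ.2.2, by rw [hτ.2.1, map_zero, add_zero]⟩

lemma IsShiftY.isDilateTranslate {σ : F2 K ≃+* F2 K} (hσ : IsShiftY σ) :
    IsDilateTranslate 1 1 σ :=
  ⟨hσ.1, by rw [hσ.2.1, map_one, one_mul], by rw [hσ.2.2, map_one]⟩

namespace IsDilateTranslate

variable {a b a' b' : K} {φ ψ : F2 K ≃+* F2 K}

lemma ne_zero (hφ : IsDilateTranslate a b φ) : a ≠ 0 := by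
  rintro rfl
  have hx : φ (Fx K) = 0 := by rw [hφ.2.1, map_zero, zero_mul]
  have hX : (RatFunc.X : RatFunc K) = 0 := by simpa [Fx] using hx
  exact RatFunc.X_ne_zero hX

lemma one : IsDilateTranslate 1 0 (1 : F2 K ≃+* F2 K) := by
  simp [IsDilateTranslate]

lemma mul (hφ : IsDilateTranslate a b φ) (hψ : IsDilateTranslate a' b' ψ) :
    IsDilateTranslate (a * a') (b + b') (φ * ψ) := by
  obtain ⟨hφc, hφx, hφy⟩ := hφ
  obtain ⟨hψc, hψx, hψy⟩ := hψ
  refine ⟨fun c ↦ ?_, ?_, ?_⟩ <;> rw [RingAut.mul_apply]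
  · rw [hψc, hφc]
  · rw [hψx, map_mul, hφc, hφx, map_mul]
    ring
  · rw [hψy, map_add, hφc, hφy, map_add, add_assoc]

lemma inv (hφ : IsDilateTranslate a b φ) : IsDilateTranslate a⁻¹ (-b) φ⁻¹ := by
  have ha : a ≠ 0 := hφ.ne_zero
  obtain ⟨hφc, hφx, hφy⟩ := hφ
  refine ⟨fun c ↦ ?_, ?_, ?_⟩ <;> refine φ.symm_apply_eq.2 ?_
  · rw [hφc]
  · rw [map_mul, hφc, hφx, ← mul_assoc, ← map_mul, inv_mul_cancel₀ ha, map_one, one_mul]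
  · rw [map_add, hφc, hφy, map_neg, add_neg_cancel_right]

lemma zpow (hφ : IsDilateTranslate a b φ) (i : ℤ) :
    IsDilateTranslate (a ^ i) (i * b) (φ ^ i) := by
  induction i using Int.induction_on with
  | zero => simpa using one
  | succ n ih => simpa [zpow_add_one, zpow_add_one₀ hφ.ne_zero, add_mul] using ih.mul hφ
  | pred n ih =>
    rw [zpow_sub_one, zpow_sub_one₀ hφ.ne_zero, Int.cast_sub, Int.cast_one, sub_mul, one_mul,
      sub_eq_add_neg]
    exact ih.mul hφ.inv

lemma apply_FPP_swap (hφ : IsDilateTranslate a b φ) (r : K[X][X]) :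
    φ (FPP K (Bivariate.swap r)) = FPP K (Bivariate.swap (dilateTranslate a b r)) := by
  obtain ⟨hφc, hφx, hφy⟩ := hφ
  let ι : K[X][X] →+* F2 K := (FPP K).comp (Bivariate.swap (R := K) : K[X][X] →+* K[X][X])
  have hιc (c : K) : ι (C (C c)) = Fc K c := by
    simp only [ι, RingHom.comp_apply, RingHom.coe_coe, Bivariate.swap_C_C, FPP_C_C]
  have hιx : ι X = Fx K := by
    simp only [ι, RingHom.comp_apply, RingHom.coe_coe, Bivariate.swap_Y, FPP_C_X]
  have hιy : ι (C X) = Fy K := by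
    simp only [ι, RingHom.comp_apply, RingHom.coe_coe, Bivariate.swap_X, FPP_X]
  suffices (φ : F2 K →+* F2 K).comp ι = ι.comp (dilateTranslate a b) from
    RingHom.congr_fun this r
  ext c
  · simp [dilateTranslate_C_C, hιc, hφc]
  · simp [dilateTranslate_C_X, hιc, hιy, hφy]
  · simp [dilateTranslate_X, hιc, hιx, hφx]

lemma exists_eq_PY_of_apply_FPP_eq_self (hφ : IsDilateTranslate a b φ) (ha : ¬IsOfFinOrder a)
    {p : K[X][X]} (hp : φ (FPP K p) = FPP K p) : ∃ e : K[X], p = PY K e := by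
  obtain ⟨r, rfl⟩ := (Bivariate.swap (R := K)).surjective p
  have hr : dilateTranslate a b r = r :=
    Bivariate.swap.injective <| FPP_injective <| (hφ.apply_FPP_swap r).symm.trans hp
  refine ⟨r.coeff 0, ?_⟩
  calc
    Bivariate.swap r = Bivariate.swap (C (r.coeff 0)) :=
      congrArg _ (eq_C_of_dilateTranslate_eq_self ha hr)
    _ = PY K (r.coeff 0) := Bivariate.swap_C _

end IsDilateTranslate

theorem stmt13_general {q : K} (hq : NotRootOfUnity q) {τ : F2 K ≃+* F2 K} (hτ : IsQShiftX q τ)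
    {σy : F2 K ≃+* F2 K} (hσy : IsShiftY σy) {p : K[X][X]} {i j : ℤ} (hi : i ≠ 0)
    (hfix : (τ ^ i) ((σy ^ j) (FPP K p)) = FPP K p) : ∃ e : K[X], p = PY K e := by
  have hcomp := (hτ.isDilateTranslate.zpow i).mul (hσy.isDilateTranslate.zpow j)
  refine hcomp.exists_eq_PY_of_apply_FPP_eq_self ?_ hfix
  rw [one_zpow, mul_one]
  exact not_isOfFinOrder_zpow (notRootOfUnity_iff_not_isOfFinOrder.1 hq) hi

end FunctionField

/-- Lemma 3: let `q ∈ k \ {0}` not be a root of unity and let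
`p ∈ k[x,y]` be irreducible. If `τ_{x,q}^i σ_y^j(p) = p` for some `i, j ∈ ℤ` with
`i ≠ 0`, then `p ∈ k[y]`. -/
theorem stmt13 {k : Type*} [Field k] [CharZero k]
    (q : k) (hq : q ≠ 0) (hqru : NotRootOfUnity q)
    (τ : F2 k ≃+* F2 k) (hτ : IsQShiftX q τ)
    (σy : F2 k ≃+* F2 k) (hσy : IsShiftY σy)
    (p : Polynomial (Polynomial k)) (hp : Irreducible p)
    (i j : ℤ) (hi : i ≠ 0)
    (hfix : (τ ^ i) ((σy ^ j) (FPP k p)) = FPP k p) :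
    ∃ e : Polynomial k, p = PY k e :=
  stmt13_general hqru hτ hσy hi hfix
end
end
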